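/- arXiv:2401.02434 — 3 statements merged into one kernel-verified Lean document; each statement's English description precedes it below -/
import Mathlib

section
/- Let k ≥ 1 and let a_1, …, a_k be positive integers with a_k ≥ 2. Then S applied to the bit string replicate (a_k − 2) false ++ [true] ++ replicate (a_{k−1} − 1) false ++ [true] ++ replicate (a_{k−2} − 1) false ++ ⋯ ++ [true] ++ replicate (a_1 − 1) false (for k = 1 the string is just replicate (a_1 − 2) false) equals cf(a_1, …, a_k). -/
/-- Helper computing the S-tree value from the reversed 0-1 sequence. -/
def Sa : List Bool → ℚ
  | [] => 1/2
  | b :: t => if b then 1 / (1 + Sa t) else Sa t / (1 + Sa t)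

/-- The S-tree map: `S [] = 1/2`, `S (s ++ [false]) = S s / (1 + S s)` and
`S (s ++ [true]) = 1 / (1 + S s)`. -/
def S (s : List Bool) : ℚ := Sa s.reverse

/-- Continued fraction value `cf [a₁, …, a_k] = 1/(a₁ + 1/(a₂ + ⋯ + 1/a_k))`. -/
def cf : List ℕ → ℚ
  | [] => 0
  | a :: t => 1 / ((a : ℚ) + cf t)

/-- The 0-1 sequence of a continued fraction on the S-tree, built from the *reversed*
list `[a_k, …, a₁]`: `replicate (a_k − 2) false` followed, for `i = k−1` down to `1`,
by `true :: replicate (a_i − 1) false`. -/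
def sSeq : List ℕ → List Bool
  | [] => []
  | a :: t => List.replicate (a - 2) false ++
      t.flatMap (fun b => true :: List.replicate (b - 1) false)

/-!
In the coordinate `1 / x` the move `false : x ↦ x / (1 + x)` is translation by `1`, while
`true : x ↦ 1 / (1 + x)` inverts `x + 1`. Hence the block `true` followed by `a - 1` times `false`
sends `x` to `1 / (a + x)`, which is the step that prepends the digit `a` to a continued fraction.
The root `1 / 2` is moved to `1 / a_k` by `a_k - 2` moves `false`, and the remaining digits are
prepended block by block.
-/

theorem S_nil : S [] = 1 / 2 := rfl

theorem S_append_false (s : List Bool) : S (s ++ [false]) = S s / (1 + S s) := by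
  simp [S, Sa]

theorem S_append_true (s : List Bool) : S (s ++ [true]) = 1 / (1 + S s) := by
  simp [S, Sa]

theorem S_pos (s : List Bool) : 0 < S s := by
  induction s using List.reverseRecOn with
  | nil => norm_num [S_nil]
  | append_singleton s b ih =>
    cases b
    · rw [S_append_false]
      positivity
    · rw [S_append_true]
      positivity

theorem inv_S_append_false (s : List Bool) : (S (s ++ [false]))⁻¹ = (S s)⁻¹ + 1 := by
  have hs : S s ≠ 0 := (S_pos s).ne'
  rw [S_append_false, inv_div, add_div, div_self hs, one_div]

theorem inv_S_append_true (s : List Bool) : (S (s ++ [true]))⁻¹ = S s + 1 := by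
  rw [S_append_true, one_div, inv_inv, add_comm]

theorem inv_S_append_replicate_false (s : List Bool) (n : ℕ) :
    (S (s ++ List.replicate n false))⁻¹ = (S s)⁻¹ + n := by
  induction n with
  | zero => simp
  | succ n ih =>
    rw [List.replicate_succ', ← List.append_assoc, inv_S_append_false, ih, Nat.cast_succ, add_assoc]

theorem S_replicate_false (n : ℕ) : S (List.replicate n false) = 1 / (n + 2) := by
  have h := inv_S_append_replicate_false [] n
  rw [List.nil_append, S_nil, one_div, inv_inv] at h
  rw [one_div, add_comm, ← h, inv_inv]

theorem S_append_true_cons_replicate_false (s : List Bool) (n : ℕ) :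
    S (s ++ true :: List.replicate n false) = 1 / (n + 1 + S s) := by
  have h := inv_S_append_replicate_false (s ++ [true]) n
  rw [List.append_assoc, List.singleton_append, inv_S_append_true] at h
  rw [one_div, ← inv_inj, h, inv_inv]
  ring

theorem sSeq_append_singleton {r : List ℕ} (hr : r ≠ []) (a : ℕ) :
    sSeq (r ++ [a]) = sSeq r ++ true :: List.replicate (a - 1) false := by
  obtain ⟨b, t, rfl⟩ := List.exists_cons_of_ne_nil hr
  simp [sSeq]

theorem S_sSeq_singleton {a : ℕ} (ha : 2 ≤ a) : S (sSeq [a]) = 1 / a := by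
  obtain ⟨n, rfl⟩ := Nat.exists_eq_add_of_le' ha
  simp [sSeq, S_replicate_false]

theorem S_sSeq_append_singleton {r : List ℕ} (hr : r ≠ []) {a : ℕ} (ha : 0 < a) :
    S (sSeq (r ++ [a])) = 1 / (a + S (sSeq r)) := by
  rw [sSeq_append_singleton hr, S_append_true_cons_replicate_false, Nat.cast_pred ha,
    sub_add_cancel]

/-- For positive integers `a₁, …, a_k` (`k ≥ 1`) with `a_k ≥ 2`, the S-tree vertex with
0-1 sequence `replicate (a_k − 2) false ++ [true] ++ replicate (a_{k−1} − 1) false ++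
⋯ ++ [true] ++ replicate (a₁ − 1) false` equals `cf (a₁, …, a_k)`. -/
theorem stree_vertex_of_cf (l : List ℕ) (hne : l ≠ []) (hpos : ∀ a ∈ l, 0 < a)
    (hlast : 2 ≤ l.getLast hne) :
    S (sSeq l.reverse) = cf l := by
  induction l, hne using List.recNeNil with
  | singleton a =>
    rw [List.getLast_singleton] at hlast
    rw [List.reverse_singleton, S_sSeq_singleton hlast, cf, cf, add_zero]
  | cons a t ht ih =>
    rw [List.forall_mem_cons] at hpos
    rw [List.getLast_cons ht] at hlast
    rw [List.reverse_cons, S_sSeq_append_singleton (List.reverse_ne_nil_iff.mpr ht) hpos.1,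
      ih hpos.2 hlast, cf]
end

section
/- For every bit string s, the two components of V s are coprime: Nat.gcd (V s).1 (V s).2 = 1. In other words, all the vertices of the SC-tree (except the pseudo-fractions 1/0 and 0/1) are reduced rational numbers. -/
/-!
Regard a state `(p, d)` as a 2 × 2 matrix. A step of the tree replaces it by `(p, p + d)` or
`(d, p + d)`, which changes the determinant at most by a sign, so it stays `±1`. It is also the
determinant of `(p + d, d)`, hence an integer combination of the two components of the vertex
`p + d`, which are therefore coprime.
-/

/-- Helper computing the SC-tree state from the reversed 0-1 sequence. -/
def Ha : List Bool → (ℕ × ℕ) × (ℕ × ℕ)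
  | [] => ((1, 0), (0, 1))
  | b :: t =>
      if b then ((Ha t).2, (Ha t).1 + (Ha t).2) else ((Ha t).1, (Ha t).1 + (Ha t).2)

/-- The SC-tree state map: `H [] = ((1,0),(0,1))` and, if `H s = (p, d)`, then
`H (s ++ [false]) = (p, p + d)` and `H (s ++ [true]) = (d, p + d)`. -/
def H (s : List Bool) : (ℕ × ℕ) × (ℕ × ℕ) := Ha s.reverse

/-- The SC-tree vertex at position `s`: the pair `p + d`, regarded as a fraction. -/
def V (s : List Bool) : ℕ × ℕ := (H s).1 + (H s).2

/-- The determinant of the 2 × 2 matrix with rows `p` and `q`. It takes values in `ℤ` so that the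
subtraction is not truncated. -/
def pairDet (p q : ℕ × ℕ) : ℤ := p.1 * q.2 - p.2 * q.1

theorem pairDet_self (p : ℕ × ℕ) : pairDet p p = 0 := by
  unfold pairDet
  ring

theorem neg_pairDet (p q : ℕ × ℕ) : -pairDet p q = pairDet q p := by
  unfold pairDet
  ring

theorem pairDet_add_left (p q r : ℕ × ℕ) : pairDet (p + q) r = pairDet p r + pairDet q r := by
  simp only [pairDet, Prod.fst_add, Prod.snd_add, Nat.cast_add]
  ring

theorem pairDet_add_right (p q r : ℕ × ℕ) : pairDet p (q + r) = pairDet p q + pairDet p r := by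
  rw [← neg_pairDet, pairDet_add_left, neg_add, neg_pairDet, neg_pairDet]

theorem isCoprime_of_isUnit_mul_sub_mul {R : Type*} [CommRing R] {a b c d : R}
    (h : IsUnit (a * d - b * c)) : IsCoprime a b := by
  obtain ⟨u, hu⟩ := h.exists_left_inv
  exact ⟨u * d, -(u * c), by linear_combination hu⟩

theorem coprime_of_isUnit_pairDet {p q : ℕ × ℕ} (h : IsUnit (pairDet p q)) :
    Nat.Coprime p.1 p.2 :=
  Nat.isCoprime_iff_coprime.mp (isCoprime_of_isUnit_mul_sub_mul h)

theorem H_nil : H [] = ((1, 0), (0, 1)) := rfl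

theorem H_append_false (s : List Bool) : H (s ++ [false]) = ((H s).1, (H s).1 + (H s).2) := by
  simp [H, Ha]

theorem H_append_true (s : List Bool) : H (s ++ [true]) = ((H s).2, (H s).1 + (H s).2) := by
  simp [H, Ha]

theorem isUnit_pairDet_H (s : List Bool) : IsUnit (pairDet (H s).1 (H s).2) := by
  induction s using List.reverseRecOn with
  | nil => simp [H_nil, pairDet]
  | append_singleton s b ih =>
    cases b with
    | false => rwa [H_append_false, pairDet_add_right, pairDet_self, zero_add]
    | true => rwa [H_append_true, pairDet_add_right, pairDet_self, add_zero, ← neg_pairDet,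
        IsUnit.neg_iff]

theorem pairDet_V_H_snd (s : List Bool) : pairDet (V s) (H s).2 = pairDet (H s).1 (H s).2 := by
  rw [V, pairDet_add_left, pairDet_self, add_zero]

/-- All vertices of the SC-tree (except the pseudo-fractions `1/0` and `0/1`) are
reduced: the numerator and denominator of `V s` are coprime. -/
theorem sctree_vertices_reduced (s : List Bool) :
    Nat.gcd (V s).1 (V s).2 = 1 := by
  have det_isUnit : IsUnit (pairDet (V s) (H s).2) := by
    rw [pairDet_V_H_snd]
    exact isUnit_pairDet_H s
  exact coprime_of_isUnit_pairDet det_isUnit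
end

section
/- For every bit string E = [e_1, …, e_L], define the bit string F = [f_1, …, f_L] by f_1 = ¬e_1 and f_i = e_i XOR e_{i−1} for 2 ≤ i ≤ L. Then B E = V F (equality of pairs in ℕ × ℕ): the vertex of the Stern–Brocot tree with 0-1 sequence E is exactly the vertex of the SC-tree with 0-1 sequence F. (This is the digit recoding of Theorem 3.1, which the paper equivalently phrases via the binary values of the augmented sequences 1E and 1F.) -/
/-- Helper computing the Stern–Brocot state from the reversed 0-1 sequence. -/
def SBa : List Bool → (ℕ × ℕ) × (ℕ × ℕ)
  | [] => ((0, 1), (1, 0))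
  | b :: t =>
      if b then ((SBa t).1 + (SBa t).2, (SBa t).2) else ((SBa t).1, (SBa t).1 + (SBa t).2)

/-- The Stern–Brocot state map: `SB [] = ((0,1),(1,0))` and, if `SB s = (l, r)`, then
`SB (s ++ [false]) = (l, l + r)` and `SB (s ++ [true]) = (l + r, r)`. -/
def SB (s : List Bool) : (ℕ × ℕ) × (ℕ × ℕ) := SBa s.reverse

/-- The Stern–Brocot vertex at position `s`: the mediant `l + r` of the state. -/
def B (s : List Bool) : ℕ × ℕ := (SB s).1 + (SB s).2

/-- Helper for the digit recoding: `recodeAux prev [e_i, …]` produces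
`[e_i XOR prev, …]`, carrying along the previous digit. -/
def recodeAux : Bool → List Bool → List Bool
  | _, [] => []
  | prev, e :: t => (xor e prev) :: recodeAux e t

/-- The digit recoding of Theorem 3.1: `f₁ = ¬e₁` and `fᵢ = eᵢ XOR e_{i−1}`. -/
def recode : List Bool → List Bool
  | [] => []
  | e :: t => (!e) :: recodeAux e t

section Steps

variable {M : Type*}

/-- The Stern–Brocot transition `(l, r) ↦ (l, l + r)` for the digit `false` and
`(l, r) ↦ (l + r, r)` for `true`; the state comes first, so that `List.foldl` runs the tree. -/
def sternBrocotStep [Add M] (x : M × M) (e : Bool) : M × M :=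
  if e then (x.1 + x.2, x.2) else (x.1, x.1 + x.2)

/-- The SC transition `(p, d) ↦ (p, p + d)` for the digit `false` and `(p, d) ↦ (d, p + d)` for
`true`, with the argument order of `sternBrocotStep`. -/
def scStep [Add M] (x : M × M) (f : Bool) : M × M :=
  if f then (x.2, x.1 + x.2) else (x.1, x.1 + x.2)

/-- The correspondence between Stern–Brocot states and SC states when the last Stern–Brocot digit
is `b`: the SC tree keeps the newest mediant in second position, whereas the Stern–Brocot tree has
it in first position after the digit `true`. -/
def swapIf (b : Bool) (x : M × M) : M × M :=
  if b then x.swap else x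

theorem swapIf_fst_add_snd [AddCommMagma M] (b : Bool) (x : M × M) :
    (swapIf b x).1 + (swapIf b x).2 = x.1 + x.2 := by
  cases b
  · rfl
  · exact add_comm x.2 x.1

theorem scStep_swapIf_xor [AddCommMagma M] (b e : Bool) (x : M × M) :
    scStep (swapIf b x) (xor e b) = swapIf e (sternBrocotStep x e) := by
  cases b <;> cases e <;> simp [scStep, swapIf, sternBrocotStep, add_comm]

theorem foldl_scStep_swapIf_recodeAux [AddCommMagma M] (b : Bool) (E : List Bool) (x : M × M) :
    (recodeAux b E).foldl scStep (swapIf b x) =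
      swapIf (E.getLastD b) (E.foldl sternBrocotStep x) := by
  induction E generalizing b x with
  | nil => rfl
  | cons e E ih =>
    calc (recodeAux b (e :: E)).foldl scStep (swapIf b x)
        = (recodeAux e E).foldl scStep (scStep (swapIf b x) (xor e b)) := rfl
      _ = (recodeAux e E).foldl scStep (swapIf e (sternBrocotStep x e)) := by
        rw [scStep_swapIf_xor]
      _ = swapIf (E.getLastD e) (E.foldl sternBrocotStep (sternBrocotStep x e)) := ih e _
      _ = swapIf ((e :: E).getLastD b) ((e :: E).foldl sternBrocotStep x) := by
        rw [List.getLastD_cons, List.foldl_cons]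

end Steps

theorem SB_eq_foldl (s : List Bool) : SB s = s.foldl sternBrocotStep ((0, 1), (1, 0)) := by
  induction s using List.reverseRecOn with
  | nil => rfl
  | append_singleton s e ih =>
    rw [List.foldl_concat, ← ih]
    simp only [SB, List.reverse_concat, SBa, sternBrocotStep]

theorem H_eq_foldl (s : List Bool) : H s = s.foldl scStep ((1, 0), (0, 1)) := by
  induction s using List.reverseRecOn with
  | nil => rfl
  | append_singleton s f ih =>
    rw [List.foldl_concat, ← ih]
    simp only [H, List.reverse_concat, Ha, scStep]

theorem recode_eq_recodeAux_true (E : List Bool) : recode E = recodeAux true E := by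
  cases E with
  | nil => rfl
  | cons e E => rw [recode, recodeAux, Bool.xor_true]

theorem H_recode (E : List Bool) : H (recode E) = swapIf (E.getLastD true) (SB E) := by
  rw [H_eq_foldl, recode_eq_recodeAux_true, SB_eq_foldl]
  exact foldl_scStep_swapIf_recodeAux true E ((0, 1), (1, 0))

/-- The vertex of the Stern–Brocot tree with 0-1 sequence `E` is exactly the vertex of
the SC-tree with 0-1 sequence `F`, where `f₁ = ¬e₁` and `fᵢ = eᵢ XOR e_{i−1}`. -/
theorem sternBrocot_eq_sctree_recode (E : List Bool) :
    B E = V (recode E) := by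
  rw [B, V, H_recode, swapIf_fst_add_snd]
end
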